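/- Let α > 0 and β > 0 with α + β < 1, let b ≥ 0 and T > 0. Then there exists a constant C ≥ 1, depending only on α, β, b and T, such that for every a ≥ 0 and every nonnegative measurable function u on [0,T] with t ↦ t^{−β} u(t) integrable on [0,T], the integral inequality u(t) ≤ a + b ∫_0^t (t−s)^{−α} s^{−β} u(s) ds for all t ∈ [0,T] implies u(t) ≤ C · a for all t ∈ [0,T]. -/

import Mathlib

open MeasureTheory

lemma gg_beta (p q : ℝ) (hp : 0 < p) (hp1 : p < 1) (hq : 0 < q) (hq1 : q < 1) :
    ∃ K : ℝ, 0 ≤ K ∧ ∀ r t : ℝ, r < t →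
      ∫⁻ s in Set.Ioo r t, ENNReal.ofReal ((t - s) ^ (-p) * (s - r) ^ (-q))
        ≤ ENNReal.ofReal (K * (t - r) ^ (1 - p - q)) := by
  refine ⟨(1/2)^(-p) / (1 - q) + (1/2)^(-q) / (1 - p), ?_, ?_⟩
  · have : 0 < 1 - q := by linarith
    have : 0 < 1 - p := by linarith
    positivity
  intro r t hrt
  have h0 : 0 < t - r := by linarith
  have i1 : IntervalIntegrable (fun s : ℝ => (s - r) ^ (-q)) volume r t := by
    have := (intervalIntegral.intervalIntegrable_rpow' (a := 0) (b := t - r) (r := -q) (by linarith)).comp_sub_right r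
    simpa using this
  have i2 : IntervalIntegrable (fun s : ℝ => (t - s) ^ (-p)) volume r t := by
    have := (intervalIntegral.intervalIntegrable_rpow' (a := t - r) (b := 0) (r := -p) (by linarith)).comp_sub_left t
    simpa using this
  have e1 : ∫ s in r..t, (s - r) ^ (-q) = (t - r) ^ (1 - q) / (1 - q) := by
    rw [intervalIntegral.integral_comp_sub_right (fun s : ℝ => s ^ (-q)) r,
      integral_rpow (Or.inl (by linarith)), sub_self, Real.zero_rpow (by linarith)]
    rw [sub_zero, show -q + 1 = 1 - q by ring]
  have e2 : ∫ s in r..t, (t - s) ^ (-p) = (t - r) ^ (1 - p) / (1 - p) := by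
    rw [intervalIntegral.integral_comp_sub_left (fun s : ℝ => s ^ (-p)) t,
      integral_rpow (Or.inl (by linarith)), sub_self, Real.zero_rpow (by linarith)]
    rw [sub_zero, show -p + 1 = 1 - p by ring]
  set F : ℝ → ℝ := fun s => ((t - r)/2) ^ (-p) * (s - r) ^ (-q) + ((t - r)/2) ^ (-q) * (t - s) ^ (-p) with hF
  have iF : IntervalIntegrable F volume r t := (i1.const_mul _).add (i2.const_mul _)
  have eF : ∫ s in r..t, F s = ((1/2)^(-p) / (1 - q) + (1/2)^(-q) / (1 - p)) * (t - r) ^ (1 - p - q) := by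
    rw [hF, intervalIntegral.integral_add (i1.const_mul _) (i2.const_mul _),
      intervalIntegral.integral_const_mul, intervalIntegral.integral_const_mul, e1, e2,
      div_eq_mul_one_div (t - r) 2, Real.mul_rpow h0.le (by norm_num), Real.mul_rpow h0.le (by norm_num)]
    have a1 : (t - r) ^ (1 - p - q) = (t - r) ^ (-p) * (t - r) ^ (1 - q) := by
      rw [← Real.rpow_add h0]; ring_nf
    have a2 : (t - r) ^ (-q) * (t - r) ^ (1 - p) = (t - r) ^ (-p) * (t - r) ^ (1 - q) := by
      rw [← Real.rpow_add h0, ← Real.rpow_add h0]; ring_nf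
    rw [a1]
    linear_combination ((1/2)^(-q) / (1 - p)) * a2
  have hle : ∀ s ∈ Set.Ioo r t, (t - s) ^ (-p) * (s - r) ^ (-q) ≤ F s := by
    intro s hs
    have hs1 : 0 < s - r := by linarith [hs.1]
    have hs2 : 0 < t - s := by linarith [hs.2]
    have hh : 0 < (t - r) / 2 := by linarith
    rcases le_total ((t - r)/2) (t - s) with h | h
    · have := Real.rpow_le_rpow_of_nonpos hh h (z := -p) (by linarith)
      have h3 : 0 ≤ ((t - r)/2) ^ (-q) * (t - s) ^ (-p) := by positivity
      have h4 : 0 ≤ (s - r) ^ (-q) := by positivity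
      simp only [hF]
      nlinarith
    · have := Real.rpow_le_rpow_of_nonpos hh (show (t - r)/2 ≤ s - r by linarith) (z := -q) (by linarith)
      have h3 : 0 ≤ ((t - r)/2) ^ (-p) * (s - r) ^ (-q) := by positivity
      have h4 : 0 ≤ (t - s) ^ (-p) := by positivity
      simp only [hF]
      nlinarith
  calc _ ≤ ∫⁻ s in Set.Ioo r t, ENNReal.ofReal (F s) :=
        setLIntegral_mono' measurableSet_Ioo fun s hs => ENNReal.ofReal_le_ofReal (hle s hs)
    _ = ENNReal.ofReal (∫ s in Set.Ioo r t, F s) := by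
        rw [ofReal_integral_eq_lintegral_ofReal]
        · exact ((intervalIntegrable_iff_integrableOn_Ioo_of_le hrt.le).1 iF)
        · filter_upwards [ae_restrict_mem measurableSet_Ioo] with s hs
          have hs1 : 0 < s - r := by linarith [hs.1]
          have hs2 : 0 < t - s := by linarith [hs.2]
          exact le_trans (by positivity) (hle s hs)
    _ ≤ _ := by
        rw [← eF, intervalIntegral.integral_of_le hrt.le, integral_Ioc_eq_integral_Ioo]

lemma gg_exp (y η : ℝ) (hy : 0 < y) (h0 : 0 < η) (h1 : η < 1) :
    Real.exp (-y) ≤ y ^ (-η) := by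
  rw [Real.exp_neg, Real.rpow_neg hy.le]
  apply inv_anti₀ (by positivity)
  rcases le_total y 1 with h | h
  · exact (Real.rpow_le_one hy.le h h0.le).trans (Real.one_le_exp hy.le)
  · calc y ^ η ≤ y ^ (1:ℝ) := Real.rpow_le_rpow_of_exponent_le h h1.le
      _ ≤ _ := by rw [Real.rpow_one]; linarith [Real.add_one_le_exp y]

lemma gg_int (f : ℝ → ℝ) (t : ℝ) (ht : 0 ≤ t) (hf : Measurable f)
    (h0 : ∀ s ∈ Set.Ioo 0 t, 0 ≤ f s) :
    ENNReal.ofReal (∫ s in (0:ℝ)..t, f s) ≤ ∫⁻ s in Set.Ioo 0 t, ENNReal.ofReal (f s) := by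
  rw [intervalIntegral.integral_of_le ht, integral_Ioc_eq_integral_Ioo,
    integral_eq_lintegral_of_nonneg_ae]
  · exact ENNReal.ofReal_toReal_le
  · filter_upwards [ae_restrict_mem measurableSet_Ioo] with s hs using h0 s hs
  · exact hf.aestronglyMeasurable

lemma gg_swap (F : ℝ → ℝ → ENNReal) (hF : Measurable (Function.uncurry F)) (t : ℝ) :
    ∫⁻ s in Set.Ioo 0 t, ∫⁻ r in Set.Ioo 0 s, F s r
      = ∫⁻ r in Set.Ioo 0 t, ∫⁻ s in Set.Ioo r t, F s r := by
  set S : Set (ℝ × ℝ) := {x | 0 < x.2 ∧ x.2 < x.1 ∧ x.1 < t} with hS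
  have mS : MeasurableSet S :=
    (measurableSet_lt measurable_const measurable_snd).inter
      ((measurableSet_lt measurable_snd measurable_fst).inter
        (measurableSet_lt measurable_fst measurable_const))
  have hm : Measurable (S.indicator (Function.uncurry F)) := hF.indicator mS
  have L : ∫⁻ s in Set.Ioo 0 t, ∫⁻ r in Set.Ioo 0 s, F s r
      = ∫⁻ s, ∫⁻ r, S.indicator (Function.uncurry F) (s, r) := by
    rw [← lintegral_indicator measurableSet_Ioo]
    congr 1; ext s
    by_cases hs : s ∈ Set.Ioo 0 t
    · rw [Set.indicator_of_mem hs, ← lintegral_indicator measurableSet_Ioo]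
      congr 1; ext r
      have : r ∈ Set.Ioo 0 s ↔ (s, r) ∈ S := by
        simp only [hS, Set.mem_Ioo, Set.mem_setOf_eq]; have := hs.2; tauto
      by_cases h : r ∈ Set.Ioo 0 s
      · rw [Set.indicator_of_mem h, Set.indicator_of_mem (this.1 h)]; rfl
      · rw [Set.indicator_of_notMem h, Set.indicator_of_notMem (fun h' => h (this.2 h'))]
    · rw [Set.indicator_of_notMem hs]
      symm
      rw [lintegral_eq_zero_of_ae_eq_zero]
      refine Filter.Eventually.of_forall fun r => Set.indicator_of_notMem ?_ _
      rintro ⟨h1, h2, h3⟩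
      exact hs ⟨h1.trans h2, h3⟩
  have R : ∫⁻ r in Set.Ioo 0 t, ∫⁻ s in Set.Ioo r t, F s r
      = ∫⁻ r, ∫⁻ s, S.indicator (Function.uncurry F) (s, r) := by
    rw [← lintegral_indicator measurableSet_Ioo]
    congr 1; ext r
    by_cases hr : r ∈ Set.Ioo 0 t
    · rw [Set.indicator_of_mem hr, ← lintegral_indicator measurableSet_Ioo]
      congr 1; ext s
      have : s ∈ Set.Ioo r t ↔ (s, r) ∈ S := by
        simp only [hS, Set.mem_Ioo, Set.mem_setOf_eq]; have := hr.1; tauto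
      by_cases h : s ∈ Set.Ioo r t
      · rw [Set.indicator_of_mem h, Set.indicator_of_mem (this.1 h)]; rfl
      · rw [Set.indicator_of_notMem h, Set.indicator_of_notMem (fun h' => h (this.2 h'))]
    · rw [Set.indicator_of_notMem hr]
      symm
      rw [lintegral_eq_zero_of_ae_eq_zero]
      refine Filter.Eventually.of_forall fun s => Set.indicator_of_notMem ?_ _
      rintro ⟨h1, h2, h3⟩
      exact hr ⟨h1, h2.trans h3⟩
  rw [L, R, lintegral_lintegral_swap]
  exact hm.aemeasurable

/-- Finite-horizon form of the generalized Gronwall inequality with doubly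
singular kernel (Lemma 3.5): if `u ≥ 0` satisfies
`u t ≤ a + b ∫_0^t (t-s)^{-α} s^{-β} u s ds` on `[0,T]` with `α, β > 0`,
`α + β < 1`, then `u t ≤ C a` on `[0,T]` for a constant `C = C(α,β,b,T)`. -/
theorem generalized_gronwall_finite_horizon (α β b T : ℝ)
    (hα : 0 < α) (hβ : 0 < β) (hαβ : α + β < 1) (hb : 0 ≤ b) (hT : 0 < T) :
    ∃ C : ℝ, 1 ≤ C ∧ ∀ a : ℝ, 0 ≤ a → ∀ u : ℝ → ℝ, Measurable u →
      (∀ t ∈ Set.Icc (0 : ℝ) T, 0 ≤ u t) →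
      IntegrableOn (fun t : ℝ => t ^ (-β) * u t) (Set.Icc 0 T) →
      (∀ t ∈ Set.Icc (0 : ℝ) T,
        u t ≤ a + b * ∫ s in (0 : ℝ)..t, (t - s) ^ (-α) * s ^ (-β) * u s) →
      ∀ t ∈ Set.Icc (0 : ℝ) T, u t ≤ C * a := by
  obtain ⟨η, hη⟩ : ∃ η : ℝ, η = (1 - α - β) / 2 := ⟨_, rfl⟩
  have hη0 : 0 < η := by linarith
  obtain ⟨K, hK0, hK⟩ := gg_beta α β hα (by linarith) hβ (by linarith)
  obtain ⟨K2, hK20, hK2⟩ := gg_beta α (α + β + η) hα (by linarith) (by linarith) (by linarith)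
  obtain ⟨l, hl0, hl⟩ : ∃ l : ℝ, 0 < l ∧ b * (K2 * T ^ η * l ^ (-η)) ≤ 1 / 2 := by
    have h1 : Filter.Tendsto (fun l : ℝ => b * (K2 * T ^ η * l ^ (-η))) Filter.atTop (nhds 0) := by
      simpa using ((tendsto_rpow_neg_atTop hη0).const_mul (K2 * T ^ η)).const_mul b
    have h2 := h1.eventually (gt_mem_nhds (show (0:ℝ) < 1/2 by norm_num))
    obtain ⟨l, h3, h4⟩ := (h2.and (Filter.eventually_gt_atTop 0)).exists
    exact ⟨l, h4, h3.le⟩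
  set K' : ℝ := K * T ^ (1 - α - β) with hK'
  have hK'0 : 0 ≤ K' := by positivity
  refine ⟨1 + b * (Real.exp (l * T) * (2 * K')), by
    have : 0 ≤ b * (Real.exp (l * T) * (2 * K')) := by positivity
    linarith, ?_⟩
  intro a ha u hu hu0 _ hineq t ht
  have hnn : 0 ≤ b * (Real.exp (l * T) * (2 * K')) * a := by positivity
  by_cases hint : IntervalIntegrable (fun s => (t - s) ^ (-α) * s ^ (-β) * u s) volume 0 t
  swap
  · have := hineq t ht
    rw [intervalIntegral.integral_undef hint] at this
    linarith
  have u0 : ∀ s ∈ Set.Ioo 0 t, 0 ≤ u s := fun s hs => hu0 s ⟨hs.1.le, hs.2.le.trans ht.2⟩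
  set A := ∫⁻ s in Set.Ioo 0 t, ENNReal.ofReal ((t - s) ^ (-α) * s ^ (-β) * u s) with hA
  have hAfin : A ≠ ⊤ := by
    have := ((intervalIntegrable_iff_integrableOn_Ioo_of_le ht.1).1 hint)
    exact (Integrable.lintegral_lt_top this).ne
  have hIA : ENNReal.ofReal (∫ s in (0:ℝ)..t, (t - s) ^ (-α) * s ^ (-β) * u s) ≤ A := by
    apply gg_int _ _ ht.1 (by fun_prop)
    intro s hs
    have h1 : 0 < t - s := by linarith [hs.2]
    have h2 := hs.1
    have h3 := u0 s hs
    positivity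
  set w : ℝ → ℝ := fun s => Real.exp (-(l * s)) * ((t - s) ^ (-α) * s ^ (-β)) with hw
  have hwm : Measurable w := by fun_prop
  have w0 : ∀ s ∈ Set.Ioo 0 t, 0 ≤ w s := by
    intro s hs
    have h1 : 0 < t - s := by linarith [hs.2]
    have h2 := hs.1
    positivity
  set G := ∫⁻ s in Set.Ioo 0 t, ENNReal.ofReal (w s) * ENNReal.ofReal (u s) with hG
  have hGA : G ≤ A := by
    refine setLIntegral_mono' measurableSet_Ioo fun s hs => ?_
    rw [← ENNReal.ofReal_mul (w0 s hs)]
    apply ENNReal.ofReal_le_ofReal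
    apply mul_le_mul_of_nonneg_right _ (u0 s hs)
    have h1 : 0 < t - s := by linarith [hs.2]
    have h2 := hs.1
    apply mul_le_of_le_one_left (by positivity)
    rw [Real.exp_le_one_iff]
    have : 0 < l * s := by positivity
    linarith
  have hAG : A ≤ ENNReal.ofReal (Real.exp (l * T)) * G := by
    rw [hG, ← lintegral_const_mul' _ _ ENNReal.ofReal_ne_top]
    refine setLIntegral_mono' measurableSet_Ioo fun s hs => ?_
    rw [← ENNReal.ofReal_mul (w0 s hs), ← ENNReal.ofReal_mul (Real.exp_pos _).le]
    apply ENNReal.ofReal_le_ofReal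
    rw [← mul_assoc]
    apply mul_le_mul_of_nonneg_right _ (u0 s hs)
    have h1 : 0 < t - s := by linarith [hs.2]
    have h2 := hs.1
    simp only [hw]
    rw [← mul_assoc, ← Real.exp_add]
    apply le_mul_of_one_le_left (by positivity)
    rw [Real.one_le_exp_iff]
    have : l * s ≤ l * T := mul_le_mul_of_nonneg_left (hs.2.le.trans ht.2) hl0.le
    linarith
  -- pointwise inequality
  set k : ℝ → ℝ → ENNReal := fun s r => ENNReal.ofReal ((s - r) ^ (-α) * r ^ (-β)) with hk
  have hpt : ∀ s ∈ Set.Ioo 0 t, ENNReal.ofReal (u s) ≤ ENNReal.ofReal a +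
      ENNReal.ofReal b * ∫⁻ r in Set.Ioo 0 s, k s r * ENNReal.ofReal (u r) := by
    intro s hs
    refine (ENNReal.ofReal_le_ofReal (hineq s ⟨hs.1.le, hs.2.le.trans ht.2⟩)).trans ?_
    refine ENNReal.ofReal_add_le.trans ?_
    rw [ENNReal.ofReal_mul hb]
    gcongr
    refine (gg_int _ _ hs.1.le (by fun_prop) ?_).trans ?_
    · intro r hr
      have h1 : 0 < s - r := by linarith [hr.2]
      have h2 := hr.1
      have h3 := u0 r ⟨hr.1, hr.2.trans hs.2⟩
      positivity
    · refine setLIntegral_mono' measurableSet_Ioo fun r hr => ?_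
      have h1 : 0 < s - r := by linarith [hr.2]
      have h2 := hr.1
      rw [ENNReal.ofReal_mul (by positivity)]
  have hw1 : ∫⁻ s in Set.Ioo 0 t, ENNReal.ofReal (w s) ≤ ENNReal.ofReal K' := by
    rcases ht.1.eq_or_lt with h | htpos
    · simp [← h]
    have := hK 0 t htpos
    refine le_trans (setLIntegral_mono' measurableSet_Ioo fun s hs => ?_)
      (this.trans (ENNReal.ofReal_le_ofReal ?_))
    · apply ENNReal.ofReal_le_ofReal
      have h1 : 0 < t - s := by linarith [hs.2]
      have h2 := hs.1
      rw [sub_zero]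
      apply mul_le_of_le_one_left (by positivity)
      rw [Real.exp_le_one_iff]
      have : 0 < l * s := by positivity
      linarith
    · rw [sub_zero]
      apply mul_le_mul_of_nonneg_left _ hK0
      exact Real.rpow_le_rpow ht.1 ht.2 (by linarith)
  have hker : ∀ r ∈ Set.Ioo 0 t, ∫⁻ s in Set.Ioo r t, ENNReal.ofReal (w s) * k s r
      ≤ ENNReal.ofReal (K2 * T ^ η * l ^ (-η)) * ENNReal.ofReal (w r) := by
    intro r hr
    have hr0 := hr.1
    have htr : 0 < t - r := by linarith [hr.2]
    have step : ∀ s ∈ Set.Ioo r t, ENNReal.ofReal (w s) * k s r ≤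
        ENNReal.ofReal (Real.exp (-(l * r)) * r ^ (-β) * l ^ (-η)) *
          ENNReal.ofReal ((t - s) ^ (-α) * (s - r) ^ (-(α + β + η))) := by
      intro s hs
      have h1 : 0 < t - s := by linarith [hs.2]
      have h2 : 0 < s - r := by linarith [hs.1]
      have h3 : 0 < s := by linarith
      rw [hk, ← ENNReal.ofReal_mul (w0 s ⟨h3, hs.2⟩), ← ENNReal.ofReal_mul (by positivity)]
      apply ENNReal.ofReal_le_ofReal
      have g1 : Real.exp (-(l * s)) ≤ Real.exp (-(l * r)) * (l ^ (-η) * (s - r) ^ (-η)) := by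
        rw [← Real.mul_rpow hl0.le h2.le, show -(l * s) = -(l * r) + -(l * (s - r)) by ring,
          Real.exp_add]
        exact mul_le_mul_of_nonneg_left (gg_exp _ _ (by positivity) hη0 (by linarith))
          (Real.exp_pos _).le
      have g2 : s ^ (-β) ≤ (s - r) ^ (-β) :=
        Real.rpow_le_rpow_of_nonpos h2 (by linarith) (by linarith)
      have g3 : (s - r) ^ (-(α + β + η)) = (s - r) ^ (-α) * (s - r) ^ (-β) * (s - r) ^ (-η) := by
        rw [← Real.rpow_add h2, ← Real.rpow_add h2]; ring_nf
      calc w s * ((s - r) ^ (-α) * r ^ (-β))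
          ≤ ((Real.exp (-(l * r)) * (l ^ (-η) * (s - r) ^ (-η))) *
            ((t - s) ^ (-α) * (s - r) ^ (-β))) * ((s - r) ^ (-α) * r ^ (-β)) := by
            simp only [hw]; gcongr
        _ = _ := by rw [g3]; ring
    refine (setLIntegral_mono' measurableSet_Ioo step).trans ?_
    rw [lintegral_const_mul' _ _ ENNReal.ofReal_ne_top]
    refine (mul_le_mul_right (hK2 r t hr.2) _).trans ?_
    rw [← ENNReal.ofReal_mul (by positivity), ← ENNReal.ofReal_mul (by positivity)]
    apply ENNReal.ofReal_le_ofReal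
    have g4 : (t - r) ^ (1 - α - (α + β + η)) = (t - r) ^ η * (t - r) ^ (-α) := by
      rw [← Real.rpow_add htr]; congr 1; linarith
    have g5 : (t - r) ^ η ≤ T ^ η := Real.rpow_le_rpow htr.le (by linarith [ht.2]) hη0.le
    rw [g4]
    calc _ ≤ Real.exp (-(l * r)) * r ^ (-β) * l ^ (-η) * (K2 * (T ^ η * (t - r) ^ (-α))) := by
          gcongr
      _ = _ := by simp only [hw]; ring
  have hmain : G ≤ ENNReal.ofReal (K' * a) + ENNReal.ofReal (1 / 2) * G := by
    calc G ≤ ∫⁻ s in Set.Ioo 0 t, (ENNReal.ofReal (w s) * ENNReal.ofReal a + ENNReal.ofReal b *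
            ∫⁻ r in Set.Ioo 0 s, ENNReal.ofReal (w s) * (k s r * ENNReal.ofReal (u r))) := by
          refine setLIntegral_mono' measurableSet_Ioo fun s hs => ?_
          refine (mul_le_mul_right (hpt s hs) _).trans ?_
          rw [lintegral_const_mul' _ _ ENNReal.ofReal_ne_top, mul_add, mul_left_comm]
      _ = (∫⁻ s in Set.Ioo 0 t, ENNReal.ofReal (w s)) * ENNReal.ofReal a + ENNReal.ofReal b *
            ∫⁻ s in Set.Ioo 0 t, ∫⁻ r in Set.Ioo 0 s,
              ENNReal.ofReal (w s) * (k s r * ENNReal.ofReal (u r)) := by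
          rw [lintegral_add_left (by fun_prop), lintegral_mul_const' _ _ ENNReal.ofReal_ne_top,
            lintegral_const_mul' _ _ ENNReal.ofReal_ne_top]
      _ = (∫⁻ s in Set.Ioo 0 t, ENNReal.ofReal (w s)) * ENNReal.ofReal a + ENNReal.ofReal b *
            ∫⁻ r in Set.Ioo 0 t, ∫⁻ s in Set.Ioo r t,
              ENNReal.ofReal (w s) * (k s r * ENNReal.ofReal (u r)) := by
          rw [gg_swap (fun s r => ENNReal.ofReal (w s) * (k s r * ENNReal.ofReal (u r)))]
          simp only [hk, Function.uncurry_def]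
          fun_prop
      _ ≤ ENNReal.ofReal K' * ENNReal.ofReal a + ENNReal.ofReal b *
            ∫⁻ r in Set.Ioo 0 t, ENNReal.ofReal (K2 * T ^ η * l ^ (-η)) *
              (ENNReal.ofReal (w r) * ENNReal.ofReal (u r)) := by
          refine add_le_add (mul_le_mul_left hw1 _) (mul_le_mul_right ?_ _)
          refine setLIntegral_mono' measurableSet_Ioo fun r hr => ?_
          simp only [← mul_assoc]
          rw [lintegral_mul_const' _ _ ENNReal.ofReal_ne_top]
          exact mul_le_mul_left (hker r hr) _
      _ ≤ _ := by
          rw [lintegral_const_mul' _ _ ENNReal.ofReal_ne_top, ← mul_assoc,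
            ← ENNReal.ofReal_mul hb, ← ENNReal.ofReal_mul hK'0]
          gcongr
  have hGfin : G ≠ ⊤ := ne_top_of_le_ne_top hAfin hGA
  have hG2 : G.toReal ≤ 2 * K' * a := by
    have := ENNReal.toReal_mono (by finiteness) hmain
    rw [ENNReal.toReal_add (by finiteness) (by finiteness), ENNReal.toReal_mul,
      ENNReal.toReal_ofReal (by positivity), ENNReal.toReal_ofReal (by positivity)] at this
    linarith
  have hA2 : A.toReal ≤ Real.exp (l * T) * (2 * K' * a) := by
    have := ENNReal.toReal_mono (by finiteness) hAG
    rw [ENNReal.toReal_mul, ENNReal.toReal_ofReal (Real.exp_pos _).le] at this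
    exact this.trans (mul_le_mul_of_nonneg_left hG2 (Real.exp_pos _).le)
  have hI : ∫ s in (0:ℝ)..t, (t - s) ^ (-α) * s ^ (-β) * u s ≤ A.toReal :=
    (ENNReal.ofReal_le_iff_le_toReal hAfin).1 hIA
  have h1 := hineq t ht
  have h2 := mul_le_mul_of_nonneg_left (hI.trans hA2) hb
  linarith
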